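/- arXiv:1604.08191 — 2 statements merged into one kernel-verified Lean document; each statement's English description precedes it below -/
import Mathlib

section
/- Let C be a finite set of candidates with |C| ≥ 2, L an axis on C, and p a candidate that is the L-minimum or the L-maximum of C. Then there is exactly one weak order v on C that ranks p uniquely first and is single-plateaued with respect to L (equivalently, single-peaked with respect to L), namely the total order that ranks p first and the remaining candidates strictly according to their position on the axis (in order of increasing distance from p along L). -/
open scoped Classical

section Defs

variable {C : Type*}

/-- Strict preference: `a` is strictly preferred to `b` in the vote `v`. -/
def SPref (v : C → C → Prop) (a b : C) : Prop := v a b ∧ ¬ v b a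

/-- Indifference (a tie) between `a` and `b` in the vote `v`. -/
def Indiff (v : C → C → Prop) (a b : C) : Prop := v a b ∧ v b a

/-- A weak order: a complete (hence reflexive) and transitive binary relation. -/
def IsWeakOrder (v : C → C → Prop) : Prop := (∀ a b, v a b ∨ v b a) ∧ Transitive v

/-- A total (linear) order: an antisymmetric weak order. -/
def IsTotalOrderRel (v : C → C → Prop) : Prop :=
  IsWeakOrder v ∧ ∀ a b, v a b → v b a → a = b

/-- A top order: a weak order all of whose ties are within the least-preferred
indifference class. -/
def IsTopOrder (v : C → C → Prop) : Prop :=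
  IsWeakOrder v ∧ ∀ a b, a ≠ b → Indiff v a b → ∀ c, v c a

/-- `c` is among the most preferred candidates of `v`. -/
def TopCand (v : C → C → Prop) (c : C) : Prop := ∀ d, v c d

/-- `v` is single-peaked w.r.t. the axis `A`: there is a peak `p` (which is then the
unique most preferred candidate) such that `v` is strictly increasing along the part of
the axis up to `p` and strictly decreasing along the part of the axis after `p`. -/
def IsSinglePeaked (A : LinearOrder C) (v : C → C → Prop) : Prop :=
  ∃ p : C, (∀ a b, A.lt a b → A.le b p → SPref v b a) ∧
           (∀ a b, A.le p a → A.lt a b → SPref v a b)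

/-- `v` is single-plateaued w.r.t. the axis `A`: the axis splits into segments `X,Y,Z`
where the interval `Y = [y₁, y₂]` consists exactly of the most preferred candidates,
`v` is strictly increasing along `X` and strictly decreasing along `Z`. -/
def IsSinglePlateaued (A : LinearOrder C) (v : C → C → Prop) : Prop :=
  ∃ y₁ y₂ : C, A.le y₁ y₂ ∧ (∀ c, (A.le y₁ c ∧ A.le c y₂) ↔ TopCand v c) ∧
    (∀ a b, A.lt a b → A.le b y₁ → SPref v b a) ∧
    (∀ a b, A.le y₂ a → A.lt a b → SPref v a b)

/-- `v` is possibly single-peaked w.r.t. the axis `A`: `v` is weakly increasing along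
the axis up to some point `p` and weakly decreasing afterwards (so the most preferred
candidates form an interval `Y` around `p`). -/
def IsPossiblySinglePeaked (A : LinearOrder C) (v : C → C → Prop) : Prop :=
  ∃ p : C, (∀ a b, A.lt a b → A.le b p → v b a) ∧
           (∀ a b, A.le p a → A.lt a b → v a b)

/-- `v` is single-peaked with outside options w.r.t. the axis `A`: the axis splits into
segments `O₁,X,Y,Z,O₂` where the inner interval `[l,r]` (split into `X`, the peak
`Y = {p}`, and `Z`) is single-peaked, every inner candidate is strictly preferred to
every outside candidate, and all outside candidates are mutually indifferent. -/
def IsSPOutsideOptions (A : LinearOrder C) (v : C → C → Prop) : Prop :=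
  ∃ l p r : C, A.le l p ∧ A.le p r ∧
    (∀ a b, A.le l a → A.lt a b → A.le b p → SPref v b a) ∧
    (∀ a b, A.le p a → A.lt a b → A.le b r → SPref v a b) ∧
    (∀ a b, A.le l a → A.le a r → ¬ (A.le l b ∧ A.le b r) → SPref v a b) ∧
    (∀ a b, ¬ (A.le l a ∧ A.le a r) → ¬ (A.le l b ∧ A.le b r) → Indiff v a b)

/-- The number of candidates strictly preferred to `c` (the `k_i` of `c`'s class). -/
noncomputable def aboveCount [Fintype C] (v : C → C → Prop) (c : C) : ℕ :=
  Nat.card {d : C // SPref v d c}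

/-- The size of `c`'s indifference class (including `c` itself). -/
noncomputable def tiedCount [Fintype C] (v : C → C → Prop) (c : C) : ℕ :=
  Nat.card {d : C // Indiff v d c}

/-- The number of indifference classes strictly below `c`'s class. -/
noncomputable def classesBelow [Fintype C] (v : C → C → Prop) (c : C) : ℕ :=
  Set.ncard ((fun d => aboveCount v d) '' {d : C | SPref v c d})

/-- An `m`-candidate scoring vector, indexed by positions `1..m`: `α 1 ≥ α 2 ≥ ... ≥ α m`. -/
def IsScoringVec (m : ℕ) (α : ℕ → ℕ) : Prop :=
  ∀ i j, 1 ≤ i → i ≤ j → j ≤ m → α j ≤ α i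

/-- The four scoring-rule extensions: min, max, round down, and average. -/
inductive ScoreExt : Type
  | emin | emax | eroundDown | eaverage

/-- The score of candidate `c` in a weak-order vote `v` under the scoring vector `α`
(for `m` candidates) with scoring-rule extension `E`: writing the vote as indifference
classes `G₁ > ... > G_r` and `k_i = |G₁| + ... + |G_{i-1}|`, a candidate in `G_i` scores
`α (k_i + |G_i|)` under min, `α (k_i + 1)` under max, `α (m - r + i)` under round down,
and `(α (k_i + 1) + ... + α (k_i + |G_i|)) / |G_i|` under average. -/
noncomputable def extScore [Fintype C] (m : ℕ) (α : ℕ → ℕ) (E : ScoreExt)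
    (v : C → C → Prop) (c : C) : ℚ :=
  match E with
  | .emin => α (aboveCount v c + tiedCount v c)
  | .emax => α (aboveCount v c + 1)
  | .eroundDown => α (m - classesBelow v c)
  | .eaverage =>
      (∑ j ∈ Finset.Icc (aboveCount v c + 1) (aboveCount v c + tiedCount v c), (α j : ℚ))
        / (tiedCount v c : ℚ)

/-- The total weighted score of candidate `c` for a weighted profile `S`
(a list of weight/vote pairs). -/
noncomputable def profScore [Fintype C] (m : ℕ) (α : ℕ → ℕ) (E : ScoreExt)
    (S : List (ℕ × (C → C → Prop))) (c : C) : ℚ :=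
  (S.map (fun wv => (wv.1 : ℚ) * extScore m α E wv.2 c)).sum

/-- The total weight of the voters in `S` strictly preferring `a` to `b`. -/
noncomputable def prefWeight (S : List (ℕ × (C → C → Prop))) (a b : C) : ℕ :=
  (S.map (fun wv => if SPref wv.2 a b then wv.1 else 0)).sum

end Defs

/-!
A candidate `p` ranked uniquely first is the only most preferred candidate, so the plateau of a
single-plateaued vote collapses to `{p}` and `p` is a peak. When `p` is an end of the axis, one of
the two sides of the peak is trivial, and the vote is strictly monotone along the whole axis; a
reflexive relation with this property is the axis or its reverse.
-/

section RankedFirst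

variable {C : Type*} {A : LinearOrder C} {v : C → C → Prop} {p q : C}

/-- The vote `v` ranks `p` uniquely first: `p` is strictly preferred to every other candidate. -/
def RanksUniquelyFirst (v : C → C → Prop) (p : C) : Prop := ∀ d, d ≠ p → SPref v p d

/-- `p` is a peak of `v` on the axis `A`: the condition on the witness in `IsSinglePeaked`. -/
def IsPeak (A : LinearOrder C) (v : C → C → Prop) (p : C) : Prop :=
  (∀ a b, A.lt a b → A.le b p → SPref v b a) ∧ (∀ a b, A.le p a → A.lt a b → SPref v a b)

theorem IsWeakOrder.refl (hv : IsWeakOrder v) (c : C) : v c c :=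
  or_self_iff.1 (hv.1 c c)

theorem RanksUniquelyFirst.eq (hp : RanksUniquelyFirst v p) (hq : RanksUniquelyFirst v q) :
    p = q := by
  by_contra hne
  exact (hp q (Ne.symm hne)).2 (hq p hne).1

theorem RanksUniquelyFirst.topCand_iff (hp : RanksUniquelyFirst v p) (hv : ∀ c, v c c) (c : C) :
    TopCand v c ↔ c = p := by
  refine ⟨fun hc => by_contra fun hne => (hp c hne).2 (hc p), ?_⟩
  rintro rfl d
  rcases eq_or_ne d c with rfl | hd
  · exact hv d
  · exact (hp d hd).1

theorem IsPeak.ranksUniquelyFirst (h : IsPeak A v p) : RanksUniquelyFirst v p := fun d hd =>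
  hd.lt_or_gt.elim (fun hdp => h.1 d p hdp le_rfl) (fun hpd => h.2 p d le_rfl hpd)

theorem RanksUniquelyFirst.isSinglePeaked_iff (hp : RanksUniquelyFirst v p) :
    IsSinglePeaked A v ↔ IsPeak A v p := by
  refine ⟨?_, fun h => ⟨p, h⟩⟩
  rintro ⟨q, hq : IsPeak A v q⟩
  exact hp.eq hq.ranksUniquelyFirst ▸ hq

theorem RanksUniquelyFirst.isSinglePlateaued_iff (hp : RanksUniquelyFirst v p)
    (hv : ∀ c, v c c) : IsSinglePlateaued A v ↔ IsPeak A v p := by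
  have top_iff := hp.topCand_iff hv
  constructor
  · rintro ⟨y₁, y₂, hy, plateau, left, right⟩
    obtain rfl : y₁ = p := (top_iff y₁).1 ((plateau y₁).1 ⟨le_rfl, hy⟩)
    obtain rfl : y₂ = y₁ := (top_iff y₂).1 ((plateau y₂).1 ⟨hy, le_rfl⟩)
    exact ⟨left, right⟩
  · rintro ⟨left, right⟩
    have plateau (c : C) : p ≤ c ∧ c ≤ p ↔ TopCand v c := by
      rw [top_iff, and_comm, ← le_antisymm_iff]
    exact ⟨p, p, le_rfl, plateau, left, right⟩

end RankedFirst

section Monotone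

variable {C : Type*} [LinearOrder C] {v : C → C → Prop}

theorem forall_lt_sPref_iff_eq_le (hv : ∀ c, v c c) :
    (∀ a b, a < b → SPref v a b) ↔ v = (· ≤ ·) := by
  constructor
  · intro h
    funext x y
    refine propext ⟨fun hxy => not_lt.1 fun hyx => (h y x hyx).2 hxy, fun hxy => ?_⟩
    rcases hxy.eq_or_lt with rfl | hlt
    · exact hv x
    · exact (h x y hlt).1
  · rintro rfl a b hab
    exact ⟨hab.le, hab.not_ge⟩

theorem forall_gt_sPref_iff_eq_ge (hv : ∀ c, v c c) :
    (∀ a b, b < a → SPref v a b) ↔ v = (· ≥ ·) :=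
  forall_lt_sPref_iff_eq_le (C := Cᵒᵈ) hv

end Monotone

section AxisEnd

variable {C : Type*} {A : LinearOrder C} {v : C → C → Prop} {p : C}

/-- The vote that ranks the candidates by increasing distance along the axis `A` from its end `p`:
the axis itself if `p` is its minimum, and the reversed axis if `p` is its maximum. For a `p` that
is not an end of the axis, it is the junk relation `True`. -/
def orderFromEnd (A : LinearOrder C) (p x y : C) : Prop :=
  (IsBot p → A.le x y) ∧ (IsTop p → A.le y x)

theorem orderFromEnd_of_isBot (hp : IsBot p) : orderFromEnd A p = (· ≤ ·) := by
  funext x y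
  exact propext ⟨fun h => h.1 hp, fun h => ⟨fun _ => h, fun htop => (htop y).trans (hp x)⟩⟩

theorem orderFromEnd_of_isTop (hp : IsTop p) : orderFromEnd A p = (· ≥ ·) := by
  funext x y
  exact propext ⟨fun h => h.2 hp, fun h => ⟨fun hbot => (hp x).trans (hbot y), fun _ => h⟩⟩

theorem isWeakOrder_orderFromEnd (hp : IsBot p ∨ IsTop p) : IsWeakOrder (orderFromEnd A p) := by
  rcases hp with hbot | htop
  · rw [orderFromEnd_of_isBot hbot]
    exact ⟨le_total, fun _ _ _ => le_trans⟩
  · rw [orderFromEnd_of_isTop htop]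
    exact ⟨fun x y => le_total y x, fun _ _ _ => ge_trans⟩

theorem isPeak_iff_of_isBot (hp : IsBot p) : IsPeak A v p ↔ ∀ a b, a < b → SPref v a b :=
  ⟨fun h a b hab => h.2 a b (hp a) hab,
    fun h => ⟨fun a _ hab hb => absurd (hab.trans_le hb) (hp a).not_gt, fun a b _ hab => h a b hab⟩⟩

theorem isPeak_iff_of_isTop (hp : IsTop p) : IsPeak A v p ↔ ∀ a b, b < a → SPref v a b :=
  ⟨fun h a b hba => h.1 b a hba (hp a),
    fun h => ⟨fun a b hab _ => h b a hab, fun _ b ha hab => absurd (ha.trans_lt hab) (hp b).not_gt⟩⟩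

theorem isPeak_iff_eq_orderFromEnd (hp : IsBot p ∨ IsTop p) (hv : ∀ c, v c c) :
    IsPeak A v p ↔ v = orderFromEnd A p := by
  rcases hp with hbot | htop
  · rw [isPeak_iff_of_isBot hbot, forall_lt_sPref_iff_eq_le hv, orderFromEnd_of_isBot hbot]
  · rw [isPeak_iff_of_isTop htop, forall_gt_sPref_iff_eq_ge hv, orderFromEnd_of_isTop htop]

theorem ranksUniquelyFirst_and_isSinglePlateaued_iff (hp : IsBot p ∨ IsTop p)
    (hv : ∀ c, v c c) :
    RanksUniquelyFirst v p ∧ IsSinglePlateaued A v ↔ v = orderFromEnd A p := by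
  rw [← isPeak_iff_eq_orderFromEnd hp hv]
  exact ⟨fun h => (h.1.isSinglePlateaued_iff hv).1 h.2, fun h =>
    ⟨h.ranksUniquelyFirst, (h.ranksUniquelyFirst.isSinglePlateaued_iff hv).2 h⟩⟩

theorem unique_singlePlateaued_vote_with_p_first_at_axis_end_general
    (A : LinearOrder C) (p : C) (hp : IsBot p ∨ IsTop p) :
    (∃! v : C → C → Prop, IsWeakOrder v ∧ RanksUniquelyFirst v p ∧ IsSinglePlateaued A v) ∧
    (∀ v : C → C → Prop, (∀ c, v c c) → RanksUniquelyFirst v p →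
      (IsSinglePlateaued A v ↔ IsSinglePeaked A v)) ∧
    (∀ v : C → C → Prop, (∀ c, v c c) → RanksUniquelyFirst v p → IsSinglePlateaued A v →
      ∀ x y, v x y ↔ orderFromEnd A p x y) := by
  have weak := isWeakOrder_orderFromEnd hp
  refine ⟨⟨orderFromEnd A p, ⟨weak, ?_⟩, ?_⟩, ?_, ?_⟩
  · exact (ranksUniquelyFirst_and_isSinglePlateaued_iff hp weak.refl).2 rfl
  · rintro v ⟨hv, h⟩
    exact (ranksUniquelyFirst_and_isSinglePlateaued_iff hp hv.refl).1 h
  · intro v hv hfirst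
    exact (hfirst.isSinglePlateaued_iff hv).trans hfirst.isSinglePeaked_iff.symm
  · intro v hv hfirst hplateau x y
    rw [(ranksUniquelyFirst_and_isSinglePlateaued_iff hp hv).1 ⟨hfirst, hplateau⟩]

end AxisEnd

/-- For a finite candidate set with at least two candidates, an axis `A`,
and a candidate `p` that is the `A`-minimum or the `A`-maximum, there is exactly one
weak order that ranks `p` uniquely first and is single-plateaued w.r.t. `A`
(equivalently, single-peaked w.r.t. `A`), namely the total order ranking `p` first and
the remaining candidates strictly by their position on the axis (in increasing axis
order if `p` is the `A`-minimum, in decreasing axis order if `p` is the `A`-maximum). -/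
theorem unique_singlePlateaued_vote_with_p_first_at_axis_end
    {C : Type*} [Fintype C] (h2 : 2 ≤ Fintype.card C) (A : LinearOrder C)
    (p : C) (hp : (∀ d, A.le p d) ∨ (∀ d, A.le d p)) :
    (∃! v : C → C → Prop,
      IsWeakOrder v ∧ (∀ d, d ≠ p → SPref v p d) ∧ IsSinglePlateaued A v) ∧
    (∀ v : C → C → Prop, IsWeakOrder v → (∀ d, d ≠ p → SPref v p d) →
      (IsSinglePlateaued A v ↔ IsSinglePeaked A v)) ∧
    (∀ v : C → C → Prop, IsWeakOrder v → (∀ d, d ≠ p → SPref v p d) →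
      IsSinglePlateaued A v →
      ∀ x y, v x y ↔
        (((∀ d, A.le p d) → A.le x y) ∧ ((∀ d, A.le d p) → A.le y x))) := by
  obtain ⟨existsUnique, peaked_iff, order_iff⟩ :=
    unique_singlePlateaued_vote_with_p_first_at_axis_end_general A p hp
  exact ⟨existsUnique, fun v hv => peaked_iff v hv.refl, fun v hv => order_iff v hv.refl⟩
end

section
/- Let k_1, ..., k_t be positive integers with Σ_{i=1}^t k_i = 2K, K ≥ 1. Consider candidates C = {a_1, p, b_1, b_2, b_3}, the axis a_1 L p L b_1 L b_2 L b_3, and the scoring vector ⟨4,3,2,0,0⟩ (each candidate in position i of a total order scores the i-th entry). The nonmanipulators are one voter of weight 20K voting a_1 > p > b_1 > b_2 > b_3 and one voter of weight 8K voting b_1 > b_2 > b_3 > p > a_1. The manipulators have weights 4k_1, ..., 4k_t. Then there exist total-order votes for the manipulators, each single-peaked with respect to the axis, such that p is a winner (no candidate has strictly greater total weighted score) if and only if there exists a subset I ⊆ {1,...,t} with Σ_{i∈I} k_i = K. -/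
open scoped Classical

/-- The scoring vector `⟨4,3,2,0,0⟩`, indexed by positions `1,...,5`. -/
def scvec : ℕ → ℕ := fun i => [0, 4, 3, 2, 0, 0].getD i 0

/-- The candidates: `a₁` is `0`, `p` is `1`, `b₁` is `2`, `b₂` is `3`, `b₃` is `4`;
the axis is the natural order `a₁ L p L b₁ L b₂ L b₃` on `Fin 5`.
The vote `a₁ > p > b₁ > b₂ > b₃`. -/
def voteA : Fin 5 → Fin 5 → Prop := fun x y => x ≤ y

/-- The vote `b₁ > b₂ > b₃ > p > a₁` (given via its rank function). -/
def voteB : Fin 5 → Fin 5 → Prop := fun x y => (![4, 3, 0, 1, 2] x : ℕ) ≤ ![4, 3, 0, 1, 2] y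

/-- The score of candidate `c` in a total-order vote `v` under the scoring vector `α`:
the candidate in position `i` scores `α i`. -/
noncomputable def scoreTO {C : Type*} [Fintype C] (α : ℕ → ℕ) (v : C → C → Prop) (c : C) : ℕ :=
  α (aboveCount v c + 1)

/-- The total weighted score of candidate `c` in a weighted profile of total orders. -/
noncomputable def profScoreTO {C : Type*} [Fintype C] (α : ℕ → ℕ)
    (S : List (ℕ × (C → C → Prop))) (c : C) : ℕ :=
  (S.map (fun wv => wv.1 * scoreTO α wv.2 c)).sum

/-! The two fixed voters leave `p` behind `a₁` by `20K` points and behind `b₁` by `12K`. With `x`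
and `y` the points by which a manipulator's vote puts `p` ahead of `a₁` and of `b₁`, the
manipulators, of total weight `8K`, must therefore reach weighted averages of at least `5/2` for `x`
and `3/2` for `y`. Every single-peaked vote satisfies `x + 3y ≤ 7`, with equality only for
`p > a₁ > b₁ > ⋯`, where `(x, y) = (1, 2)`, and for votes `p > b₁ > ⋯` giving `a₁` no points, where
`(x, y) = (4, 1)`. Since `5/2 + 3 · 3/2 = 7`, every manipulator attains equality and the averages
are exactly `(5/2, 3/2)`. This is the midpoint of `(1, 2)` and `(4, 1)`, so the two kinds of votes
carry equal weight. -/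

section StrictPreference

variable {C : Type*} {v : C → C → Prop} {a b c : C}

lemma SPref.irrefl (v : C → C → Prop) (a : C) : ¬ SPref v a a := fun h => h.2 h.1

lemma SPref.asymm (h : SPref v a b) : ¬ SPref v b a := fun h' => h.2 h'.1

lemma SPref.trans [IsTrans C v] (hab : SPref v a b) (hbc : SPref v b c) : SPref v a c :=
  ⟨_root_.trans hab.1 hbc.1, fun hca => hab.2 (_root_.trans hbc.1 hca)⟩

lemma IsTotalOrderRel.isTrans (hv : IsTotalOrderRel v) : IsTrans C v := ⟨hv.1.2⟩

lemma IsTotalOrderRel.sPref_or_sPref (hv : IsTotalOrderRel v) (hab : a ≠ b) :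
    SPref v a b ∨ SPref v b a :=
  (hv.1.1 a b).imp (fun h => ⟨h, fun h' => hab (hv.2 a b h h')⟩)
    (fun h => ⟨h, fun h' => hab (hv.2 a b h' h)⟩)

lemma IsSinglePeaked.sPref_or_sPref_of_lt_of_lt [A : LinearOrder C] (hv : IsSinglePeaked A v)
    (hab : a < b) (hbc : b < c) : SPref v b a ∨ SPref v b c := by
  obtain ⟨q, increasing, decreasing⟩ := hv
  exact (le_total b q).imp (increasing a b hab) fun hqb => decreasing b c hqb hbc

end StrictPreference

section Scores

variable {C : Type*} [Fintype C] {v : C → C → Prop} {a b c : C} {α : ℕ → ℕ}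

lemma aboveCount_eq_card {s : Finset C} (h : ∀ d, SPref v d c ↔ d ∈ s) :
    aboveCount v c = s.card := by
  simp only [aboveCount, h, Nat.card_eq_fintype_card, Fintype.card_coe]

lemma aboveCount_eq_card_filter (v : C → C → Prop) (c : C) :
    aboveCount v c = (Finset.univ.filter fun d => SPref v d c).card :=
  aboveCount_eq_card fun _ => (Finset.mem_filter_univ (p := fun d => SPref v d c) _).symm

lemma aboveCount_lt_card (v : C → C → Prop) (c : C) : aboveCount v c < Fintype.card C := by
  rw [aboveCount_eq_card_filter]
  exact Finset.card_lt_univ_of_notMem (x := c) (by simp [SPref.irrefl])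

lemma aboveCount_le_of_sPref [IsTrans C v] (h : SPref v a b) :
    aboveCount v a ≤ aboveCount v b := by
  simp only [aboveCount_eq_card_filter]
  exact Finset.card_le_card (Finset.monotone_filter_right _ fun _ _ hd => hd.trans h)

lemma scoreTO_eq {s : Finset C} (α : ℕ → ℕ) (h : ∀ d, SPref v d c ↔ d ∈ s) :
    scoreTO α v c = α (s.card + 1) := by
  rw [scoreTO, aboveCount_eq_card h]

lemma le_scoreTO_of_subset (hα : IsScoringVec (Fintype.card C) α) {s : Finset C}
    (hs : s.card < Fintype.card C) (h : ∀ d, SPref v d c → d ∈ s) :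
    α (s.card + 1) ≤ scoreTO α v c := by
  have hle : aboveCount v c ≤ s.card := by
    rw [aboveCount_eq_card_filter]
    exact Finset.card_le_card fun d hd => h d (Finset.mem_filter_univ d |>.1 hd)
  exact hα _ _ (Nat.succ_pos _) (Nat.succ_le_succ hle) hs

lemma scoreTO_le_of_sPref [IsTrans C v] (hα : IsScoringVec (Fintype.card C) α)
    (h : SPref v a b) : scoreTO α v b ≤ scoreTO α v a :=
  hα _ _ (Nat.succ_pos _) (Nat.succ_le_succ (aboveCount_le_of_sPref h)) (aboveCount_lt_card v b)

lemma scoreTO_le_first (hα : IsScoringVec (Fintype.card C) α) (v : C → C → Prop) (c : C) :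
    scoreTO α v c ≤ α 1 :=
  hα _ _ le_rfl (Nat.succ_pos _) (aboveCount_lt_card v c)

end Scores

section RankVotes

variable {C : Type*} {r : C → ℕ}

/-- The vote preferring candidates of smaller rank `r`; an injective `r` makes it a total order. -/
def rankVote (r : C → ℕ) : C → C → Prop := fun a b => r a ≤ r b

lemma sPref_rankVote_iff {a b : C} : SPref (rankVote r) a b ↔ r a < r b :=
  lt_iff_le_not_ge.symm

lemma isTotalOrderRel_rankVote (hr : Function.Injective r) : IsTotalOrderRel (rankVote r) :=
  ⟨⟨fun a b => le_total (r a) (r b), fun _ _ _ hab hbc => le_trans hab hbc⟩,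
    fun _ _ hab hba => hr (le_antisymm hab hba)⟩

lemma isSinglePeaked_rankVote [A : LinearOrder C] {q : C}
    (hleft : ∀ a b, a < b → b ≤ q → r b < r a) (hright : ∀ a b, q ≤ a → a < b → r a < r b) :
    IsSinglePeaked A (rankVote r) :=
  ⟨q, fun a b hab hbq => sPref_rankVote_iff.2 (hleft a b hab hbq),
    fun a b hqa hab => sPref_rankVote_iff.2 (hright a b hqa hab)⟩

lemma aboveCount_rankVote [Fintype C] (hr : Function.Injective r)
    (hlt : ∀ c, r c < Fintype.card C) (c : C) : aboveCount (rankVote r) c = r c := by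
  have image_eq_range : Finset.univ.image r = Finset.range (Fintype.card C) :=
    Finset.eq_of_subset_of_card_le (by simpa [Finset.subset_iff] using hlt)
      (by simp [Finset.card_image_of_injective _ hr])
  have image_filter : (Finset.univ.filter fun d => r d < r c).image r = Finset.range (r c) := by
    rw [← Finset.filter_image (p := (· < r c)), image_eq_range]
    ext n
    simpa using fun hn => hn.trans (hlt c)
  simp only [aboveCount_eq_card_filter, sPref_rankVote_iff]
  rw [← Finset.card_image_of_injective _ hr, image_filter, Finset.card_range]

lemma scoreTO_rankVote [Fintype C] (α : ℕ → ℕ) (hr : Function.Injective r)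
    (hlt : ∀ c, r c < Fintype.card C) (c : C) : scoreTO α (rankVote r) c = α (r c + 1) := by
  rw [scoreTO, aboveCount_rankVote hr hlt]

end RankVotes

section WeightedProfiles

variable {C : Type*} [Fintype C]

lemma profScoreTO_append (α : ℕ → ℕ) (S T : List (ℕ × (C → C → Prop))) (c : C) :
    profScoreTO α (S ++ T) c = profScoreTO α S c + profScoreTO α T c := by
  simp only [profScoreTO, List.map_append, List.sum_append]

lemma profScoreTO_ofFn {t : ℕ} (α : ℕ → ℕ) (w : Fin t → ℕ) (tv : Fin t → C → C → Prop) (c : C) :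
    profScoreTO α (List.ofFn fun i => (w i, tv i)) c = ∑ i, w i * scoreTO α (tv i) c := by
  simp only [profScoreTO, List.map_ofFn, List.sum_ofFn, Function.comp_apply]

end WeightedProfiles

lemma eq_of_sum_mul_le_sum_mul {ι R : Type*} [Fintype ι] [Semiring R] [LinearOrder R]
    [IsStrictOrderedRing R] {w f : ι → R} {m : R} (hw : ∀ i, 0 < w i) (hf : ∀ i, f i ≤ m)
    (h : (∑ i, w i) * m ≤ ∑ i, w i * f i) (i : ι) : f i = m := by
  have hle : ∀ j ∈ Finset.univ, w j * f j ≤ w j * m := fun j _ =>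
    mul_le_mul_of_nonneg_left (hf j) (hw j).le
  rw [Finset.sum_mul] at h
  have heq := (Finset.sum_eq_sum_iff_of_le hle).1 ((Finset.sum_le_sum hle).antisymm h)
  exact (hf i).antisymm (le_of_mul_le_mul_left (heq i (Finset.mem_univ i)).ge (hw i))

lemma exists_sum_eq_of_margins {ι : Type*} [Fintype ι] {k : ι → ℕ} {x y : ι → ℤ} {K : ℕ}
    (hk : ∀ i, 0 < k i) (hsum : ∑ i, k i = 2 * K)
    (hxy : ∀ i, (x i = 1 ∧ y i = 2) ∨ (x i = 4 ∧ y i = 1) ∨ x i + 3 * y i < 7)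
    (hx : 5 * K ≤ ∑ i, k i * x i) (hy : 3 * K ≤ ∑ i, k i * y i) :
    ∃ I : Finset ι, ∑ i ∈ I, k i = K := by
  have sum_cast : ∑ i, (k i : ℤ) = 2 * K := mod_cast hsum
  have on_line : ∀ i, x i + 3 * y i = 7 := by
    refine eq_of_sum_mul_le_sum_mul (w := fun i => (k i : ℤ)) (fun i => mod_cast hk i)
      (fun i => by have := hxy i; lia) ?_
    calc (∑ i, (k i : ℤ)) * 7 = 5 * K + 3 * (3 * K) := by rw [sum_cast]; ring
      _ ≤ ∑ i, k i * x i + 3 * ∑ i, k i * y i := by gcongr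
      _ = ∑ i, k i * (x i + 3 * y i) := by
        rw [Finset.mul_sum, ← Finset.sum_add_distrib]
        exact Finset.sum_congr rfl fun i _ => by ring
  let I := Finset.univ.filter fun i => y i = 2
  have mul_y_eq : ∀ i, k i * y i = k i + if y i = 2 then (k i : ℤ) else 0 := fun i => by
    have := on_line i
    rcases hxy i with ⟨-, h⟩ | ⟨-, h⟩ | h
    · simp [h, mul_two]
    · simp [h]
    · lia
  have sum_y_eq : ∑ i, k i * y i = 2 * K + ∑ i ∈ I, (k i : ℤ) := by
    rw [Finset.sum_filter, ← sum_cast, ← Finset.sum_add_distrib]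
    exact Finset.sum_congr rfl fun i _ => mul_y_eq i
  have sum_x_eq : ∑ i, k i * x i = 7 * (2 * K) - 3 * ∑ i, k i * y i := by
    rw [← sum_cast, Finset.mul_sum, Finset.mul_sum, ← Finset.sum_sub_distrib]
    exact Finset.sum_congr rfl fun i _ => by rw [← on_line i]; ring
  refine ⟨I, ?_⟩
  zify
  linarith

lemma isScoringVec_scvec : IsScoringVec (Fintype.card (Fin 5)) scvec := by
  intro i j hi hij hj
  rw [Fintype.card_fin] at hj
  interval_cases j <;> interval_cases i <;> decide

section Margins

variable {v : Fin 5 → Fin 5 → Prop}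

/-- The number of points, under `⟨4,3,2,0,0⟩`, by which the vote `v` puts `a` ahead of `b`. -/
noncomputable def margin (v : Fin 5 → Fin 5 → Prop) (a b : Fin 5) : ℤ :=
  scoreTO scvec v a - scoreTO scvec v b

lemma margin_le_four (v : Fin 5 → Fin 5 → Prop) (a b : Fin 5) : margin v a b ≤ 4 := by
  have : scoreTO scvec v a ≤ 4 := scoreTO_le_first isScoringVec_scvec v a
  unfold margin
  lia

lemma margin_nonpos_of_sPref [IsTrans (Fin 5) v] {a b : Fin 5} (h : SPref v b a) :
    margin v a b ≤ 0 := by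
  have := scoreTO_le_of_sPref isScoringVec_scvec h
  unfold margin
  lia

lemma eq_zero_or_eq_one_of_sPref_two (hv : IsSinglePeaked (inferInstance : LinearOrder (Fin 5)) v)
    (h12 : SPref v 1 2) {d : Fin 5} (hd : SPref v d 2) : d = 0 ∨ d = 1 := by
  have not_two_lt : ¬ 2 < d := fun h2d =>
    (hv.sPref_or_sPref_of_lt_of_lt (a := 1) (by decide) h2d).elim h12.asymm hd.asymm
  have ne_two : d ≠ 2 := fun h => SPref.irrefl v 2 (h ▸ hd)
  lia

lemma margin_one_two_le_two (hv : IsSinglePeaked (inferInstance : LinearOrder (Fin 5)) v)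
    (h12 : SPref v 1 2) : margin v 1 2 ≤ 2 := by
  have score_p : scoreTO scvec v 1 ≤ 4 := scoreTO_le_first isScoringVec_scvec v 1
  have score_b₁ : 2 ≤ scoreTO scvec v 2 :=
    le_scoreTO_of_subset isScoringVec_scvec (s := {0, 1}) (by decide) fun d hd => by
      simpa using eq_zero_or_eq_one_of_sPref_two hv h12 hd
  unfold margin
  lia

lemma margins_eq_or_lt_of_p_first (hv : IsTotalOrderRel v)
    (hsp : IsSinglePeaked (inferInstance : LinearOrder (Fin 5)) v)
    (h10 : SPref v 1 0) (h12 : SPref v 1 2) :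
    (margin v 1 0 = 1 ∧ margin v 1 2 = 2) ∨ (margin v 1 0 = 4 ∧ margin v 1 2 = 1) ∨
      margin v 1 0 + 3 * margin v 1 2 < 7 := by
  have := hv.isTrans
  have above_two {d : Fin 5} (hd : SPref v d 2) := eq_zero_or_eq_one_of_sPref_two hsp h12 hd
  have score_p : scoreTO scvec v 1 = 4 := scoreTO_eq (s := ∅) scvec fun d => by
    refine iff_of_false (fun hd => ?_) (Finset.notMem_empty d)
    rcases above_two (hd.trans h12) with rfl | rfl
    · exact h10.asymm hd
    · exact SPref.irrefl v 1 hd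
  unfold margin
  rcases hv.sPref_or_sPref (a := 0) (b := 2) (by decide) with h02 | h20
  · have score_a₁ : scoreTO scvec v 0 = 3 := scoreTO_eq (s := {1}) scvec fun d => by
      rw [Finset.mem_singleton]
      refine ⟨fun hd => (above_two (hd.trans h02)).resolve_left ?_, fun h => h ▸ h10⟩
      exact fun h => SPref.irrefl v 0 (h ▸ hd)
    have score_b₁ : scoreTO scvec v 2 = 2 := scoreTO_eq (s := {0, 1}) scvec fun d => by
      rw [Finset.mem_insert, Finset.mem_singleton]
      exact ⟨above_two, fun h => h.elim (· ▸ h02) (· ▸ h12)⟩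
    lia
  · have score_b₁ : scoreTO scvec v 2 = 3 := scoreTO_eq (s := {1}) scvec fun d => by
      rw [Finset.mem_singleton]
      exact ⟨fun hd => (above_two hd).resolve_left fun h => h20.asymm (h ▸ hd), fun h => h ▸ h12⟩
    lia

lemma margins_eq_or_lt (hv : IsTotalOrderRel v)
    (hsp : IsSinglePeaked (inferInstance : LinearOrder (Fin 5)) v) :
    (margin v 1 0 = 1 ∧ margin v 1 2 = 2) ∨ (margin v 1 0 = 4 ∧ margin v 1 2 = 1) ∨
      margin v 1 0 + 3 * margin v 1 2 < 7 := by
  have := hv.isTrans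
  have x_le := margin_le_four v 1 0
  rcases hv.sPref_or_sPref (a := 1) (b := 2) (by decide) with h12 | h21
  · rcases hv.sPref_or_sPref (a := 1) (b := 0) (by decide) with h10 | h01
    · exact margins_eq_or_lt_of_p_first hv hsp h10 h12
    · have := margin_nonpos_of_sPref h01
      have := margin_one_two_le_two hsp h12
      lia
  · have := margin_nonpos_of_sPref h21
    lia

lemma margin_rankVote {r : Fin 5 → ℕ} (hr : Function.Injective r) (hlt : ∀ c, r c < 5)
    (a b : Fin 5) : margin (rankVote r) a b = scvec (r a + 1) - scvec (r b + 1) := by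
  rw [margin, scoreTO_rankVote scvec hr hlt, scoreTO_rankVote scvec hr hlt]

lemma margin_voteA (a b : Fin 5) :
    margin voteA a b = scvec ((a : ℕ) + 1) - scvec ((b : ℕ) + 1) :=
  margin_rankVote Fin.val_injective Fin.is_lt a b

lemma margin_voteB (a b : Fin 5) :
    margin voteB a b = scvec (![4, 3, 0, 1, 2] a + 1) - scvec (![4, 3, 0, 1, 2] b + 1) :=
  margin_rankVote (r := ![4, 3, 0, 1, 2]) (by decide) (by decide) a b

end Margins

section Construction

variable {t : ℕ}

/-- The weighted profile of the reduction: the two fixed voters, followed by manipulators of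
weights `4 * ks i` casting the votes `tv i`. -/
def partitionProfile (K : ℕ) (ks : Fin t → ℕ) (tv : Fin t → Fin 5 → Fin 5 → Prop) :
    List (ℕ × (Fin 5 → Fin 5 → Prop)) :=
  [(20 * K, voteA), (8 * K, voteB)] ++ List.ofFn fun i => (4 * ks i, tv i)

lemma profScoreTO_partitionProfile_le_iff (K : ℕ) (ks : Fin t → ℕ)
    (tv : Fin t → Fin 5 → Fin 5 → Prop) (a b : Fin 5) :
    profScoreTO scvec (partitionProfile K ks tv) b ≤
        profScoreTO scvec (partitionProfile K ks tv) a ↔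
      0 ≤ 5 * K * margin voteA a b + 2 * K * margin voteB a b +
        ∑ i, ks i * margin (tv i) a b := by
  have score_eq : ∀ c, (profScoreTO scvec (partitionProfile K ks tv) c : ℤ) =
      4 * (5 * K * scoreTO scvec voteA c + 2 * K * scoreTO scvec voteB c +
        ∑ i, (ks i : ℤ) * scoreTO scvec (tv i) c) := fun c => by
    rw [partitionProfile, profScoreTO_append, profScoreTO_ofFn]
    simp only [profScoreTO, List.map_cons, List.map_nil, List.sum_cons, List.sum_nil, mul_assoc,
      ← Finset.mul_sum]
    push_cast
    ring
  rw [← Int.ofNat_le, score_eq, score_eq]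
  simp only [margin, mul_sub, Finset.sum_sub_distrib]
  constructor <;> intro h <;> linarith

lemma exists_sum_eq_of_winner {ks : Fin t → ℕ} {K : ℕ} {tv : Fin t → Fin 5 → Fin 5 → Prop}
    (hks : ∀ i, 0 < ks i) (hsum : ∑ i, ks i = 2 * K)
    (htv : ∀ i, IsTotalOrderRel (tv i) ∧
      IsSinglePeaked (inferInstance : LinearOrder (Fin 5)) (tv i))
    (hwin : ∀ d, profScoreTO scvec (partitionProfile K ks tv) d ≤
      profScoreTO scvec (partitionProfile K ks tv) 1) :
    ∃ I : Finset (Fin t), ∑ i ∈ I, ks i = K := by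
  have beats_a₁ := (profScoreTO_partitionProfile_le_iff K ks tv 1 0).1 (hwin 0)
  have beats_b₁ := (profScoreTO_partitionProfile_le_iff K ks tv 1 2).1 (hwin 2)
  rw [show margin voteA 1 0 = -1 from margin_voteA 1 0,
    show margin voteB 1 0 = 0 from margin_voteB 1 0] at beats_a₁
  rw [show margin voteA 1 2 = 1 from margin_voteA 1 2,
    show margin voteB 1 2 = -4 from margin_voteB 1 2] at beats_b₁
  exact exists_sum_eq_of_margins hks hsum
    (fun i => margins_eq_or_lt (htv i).1 (htv i).2) (by linarith) (by linarith)

/-- The ranks of the vote `p > a₁ > b₁ > b₂ > b₃`. -/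
def rankPA : Fin 5 → ℕ := ![1, 0, 2, 3, 4]

/-- The ranks of the vote `p > b₁ > b₂ > b₃ > a₁`. -/
def rankPB : Fin 5 → ℕ := ![4, 0, 1, 2, 3]

/-- The manipulators' votes encoding the subset `I`: those in `I` vote `p > a₁ > b₁ > b₂ > b₃`,
the others `p > b₁ > b₂ > b₃ > a₁`. -/
noncomputable def subsetVotes (I : Finset (Fin t)) (i : Fin t) : Fin 5 → Fin 5 → Prop :=
  rankVote (if i ∈ I then rankPA else rankPB)

lemma isTotalOrderRel_subsetVotes (I : Finset (Fin t)) (i : Fin t) :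
    IsTotalOrderRel (subsetVotes I i) := by
  refine isTotalOrderRel_rankVote ?_
  split_ifs <;> decide

lemma isSinglePeaked_subsetVotes (I : Finset (Fin t)) (i : Fin t) :
    IsSinglePeaked (inferInstance : LinearOrder (Fin 5)) (subsetVotes I i) := by
  refine isSinglePeaked_rankVote (q := 1) ?_ ?_ <;> split_ifs <;> decide

lemma sum_mul_margin_subsetVotes {ks : Fin t → ℕ} {K : ℕ} {I : Finset (Fin t)}
    (hsum : ∑ i, ks i = 2 * K) (hI : ∑ i ∈ I, ks i = K) (a b : Fin 5) :
    ∑ i, ks i * margin (subsetVotes I i) a b =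
      K * (margin (rankVote rankPA) a b + margin (rankVote rankPB) a b) := by
  have hIc : ∑ i ∈ Iᶜ, ks i = K := by
    have := Finset.sum_add_sum_compl I ks
    lia
  rw [← Finset.sum_add_sum_compl I, mul_add]
  congr 1
  · rw [← hI, Nat.cast_sum, Finset.sum_mul]
    exact Finset.sum_congr rfl fun i hi => by rw [subsetVotes, if_pos hi]
  · rw [← hIc, Nat.cast_sum, Finset.sum_mul]
    exact Finset.sum_congr rfl fun i hi => by rw [subsetVotes, if_neg (Finset.mem_compl.1 hi)]

lemma winner_of_sum_eq {ks : Fin t → ℕ} {K : ℕ} {I : Finset (Fin t)}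
    (hsum : ∑ i, ks i = 2 * K) (hI : ∑ i ∈ I, ks i = K) (d : Fin 5) :
    profScoreTO scvec (partitionProfile K ks (subsetVotes I)) d ≤
      profScoreTO scvec (partitionProfile K ks (subsetVotes I)) 1 := by
  rw [profScoreTO_partitionProfile_le_iff, sum_mul_margin_subsetVotes hsum hI]
  have lead_nonneg : 0 ≤ 5 * margin voteA 1 d + 2 * margin voteB 1 d +
      (margin (rankVote rankPA) 1 d + margin (rankVote rankPB) 1 d) := by
    rw [margin_voteA, margin_voteB, margin_rankVote (r := rankPA) (by decide) (by decide),
      margin_rankVote (r := rankPB) (by decide) (by decide)]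
    revert d
    decide
  have := mul_nonneg (Nat.cast_nonneg (α := ℤ) K) lead_nonneg
  linarith

end Construction

/-- With nonmanipulators of weight `20K` voting `a₁ > p > b₁ > b₂ > b₃`
and of weight `8K` voting `b₁ > b₂ > b₃ > p > a₁`, and manipulators of weights
`4k₁, ..., 4kₜ` (where `k₁ + ... + kₜ = 2K`, `K ≥ 1`, each `kᵢ > 0`), the manipulators
can cast total-order votes, single-peaked w.r.t. the axis `a₁ L p L b₁ L b₂ L b₃`, that
make `p` a winner under the scoring vector `⟨4,3,2,0,0⟩` iff some subcollection of the
`kᵢ` sums to `K`. -/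
theorem manipulation_43200_total_orders_iff_partition
    (t : ℕ) (ks : Fin t → ℕ) (hks : ∀ i, 0 < ks i) (K : ℕ) (hK : 1 ≤ K)
    (hsum : ∑ i, ks i = 2 * K) :
    (∃ tv : Fin t → (Fin 5 → Fin 5 → Prop),
      (∀ i, IsTotalOrderRel (tv i) ∧
        IsSinglePeaked (inferInstance : LinearOrder (Fin 5)) (tv i)) ∧
      (∀ d : Fin 5,
        profScoreTO scvec
            ([(20 * K, voteA), (8 * K, voteB)] ++ List.ofFn (fun i => (4 * ks i, tv i))) d ≤
          profScoreTO scvec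
            ([(20 * K, voteA), (8 * K, voteB)] ++ List.ofFn (fun i => (4 * ks i, tv i)))
            (1 : Fin 5))) ↔
    (∃ I : Finset (Fin t), ∑ i ∈ I, ks i = K) := by
  constructor
  · rintro ⟨tv, htv, hwin⟩
    exact exists_sum_eq_of_winner hks hsum htv hwin
  · rintro ⟨I, hI⟩
    exact ⟨subsetVotes I,
      fun i => ⟨isTotalOrderRel_subsetVotes I i, isSinglePeaked_subsetVotes I i⟩,
      winner_of_sum_eq hsum hI⟩
end
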